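/- The concrete logic L³₂ (even-cardinality subsets of a 6-element set) admits exactly 6 two-valued states, and this set of two-valued states is full: for any two non-disjoint 2-element subsets x, y of {1,...,6}, there is a two-valued state s with s(x) = s(y) = 1. -/

import Mathlib

/-- Atoms of the concrete logic L³₂: the 2-element subsets of a 6-element set. -/
def L32Atoms : Finset (Finset (Fin 6)) := Finset.univ.powersetCard 2

/-- `b` is a block of L³₂: a maximal pairwise disjoint family of atoms
(i.e. a perfect matching of the 6-element set). -/
def L32IsBlock (b : Finset (Finset (Fin 6))) : Prop :=
  b ⊆ L32Atoms ∧ (∀ x ∈ b, ∀ y ∈ b, x ≠ y → x ∩ y = ∅) ∧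
    ∀ a ∈ L32Atoms, a ∉ b → ¬ (∀ x ∈ b, a ∩ x = ∅)

instance : DecidablePred L32IsBlock := fun b => by
  unfold L32IsBlock
  exact @instDecidableAnd _ _ (by infer_instance)
    (@instDecidableAnd _ _ (by infer_instance) (by infer_instance))

/-- Blocks of L³₂. -/
def L32Blocks : Finset (Finset (Finset (Fin 6))) := Finset.univ.filter L32IsBlock

/-- Two-valued states on L³₂, identified with the set `T` of atoms of value 1:
every block contains exactly one atom of `T`. -/
def L32States : Finset (Finset (Finset (Fin 6))) :=
  L32Atoms.powerset.filter (fun T => ∀ b ∈ L32Blocks, (b.filter (fun a => a ∈ T)).card = 1)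

/-!
Call the maximal packings of a finite set `α` by `k`-sets blocks, and suppose that `k` divides
`#α` and `3 * k ≤ #α`. A family `T` with exactly one member in each block is intersecting, since two
disjoint `k`-sets lie in a common block. If the members of `T` have no common point, `T` is closed
under exchanging one element: given `s ∈ T`, `x ∈ s`, `y ∉ s` and a member `v` of `T` avoiding `x`,
there is room for a `k`-set `q ∋ x` disjoint from `v` and from `w = s \ {x} ∪ {y}`. Then `q ∉ T`;
were `w ∉ T` too, a block through `q` and `w` would contain a member of `T` disjoint from
`q ∪ w ⊇ s`. But a nonempty family closed under exchange contains all `k`-sets, and so is not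
intersecting. Hence the members of `T` share a point `i`, and a block through any `k`-set
containing `i` shows that this `k`-set belongs to `T`.
-/

section

variable {α : Type*} [DecidableEq α]

theorem mem_of_exchange_closed {T : Set (Finset α)}
    (hT : ∀ s ∈ T, ∀ x ∈ s, ∀ y ∉ s, insert y (s.erase x) ∈ T) {s t : Finset α}
    (hs : s ∈ T) (hst : s.card = t.card) : t ∈ T := by
  induction h : (s \ t).card generalizing s with
  | zero =>
    have hsub : s ⊆ t := Finset.sdiff_eq_empty_iff_subset.1 (Finset.card_eq_zero.1 h)
    rwa [← Finset.eq_of_subset_of_card_le hsub hst.ge]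
  | succ n ih =>
    obtain ⟨x, hx⟩ : (s \ t).Nonempty := Finset.card_pos.1 (by omega)
    obtain ⟨y, hy⟩ : (t \ s).Nonempty :=
      Finset.card_pos.1 (by rw [← Finset.card_sdiff_comm hst]; omega)
    rw [Finset.mem_sdiff] at hx hy
    refine ih (hT s hs x hx.1 y hy.2) ?_ ?_
    · rw [Finset.card_insert_of_notMem (by simp [hy.2]), Finset.card_erase_add_one hx.1, hst]
    · rw [Finset.insert_sdiff_of_mem _ hy.1, Finset.erase_sdiff_comm,
        Finset.card_erase_of_mem (Finset.mem_sdiff.2 hx), h, Nat.add_sub_cancel]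

end

section

variable {α : Type*} {k : ℕ}

/-- A packing by `k`-sets: a family of pairwise disjoint `k`-element sets. -/
structure IsPacking (k : ℕ) (c : Finset (Finset α)) : Prop where
  sized : (c : Set (Finset α)).Sized k
  pairwiseDisjoint : (c : Set (Finset α)).PairwiseDisjoint id

/-- A block of the logic whose atoms are the `k`-element subsets of `α`, encoded as a maximal
packing. When `k` divides `#α` these are the partitions of `α` into `k`-sets. -/
def IsBlock (k : ℕ) (b : Finset (Finset α)) : Prop :=
  Maximal (IsPacking k) b

/-- A two-valued state on the logic whose atoms are the `k`-element subsets of `α`, encoded as the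
family `T` of atoms of value `1`. -/
structure IsTwoValuedState (k : ℕ) (T : Finset (Finset α)) : Prop where
  sized : (T : Set (Finset α)).Sized k
  existsUnique_mem : ∀ b, IsBlock k b → ∃! a, a ∈ b ∧ a ∈ T

/-- The two-valued state concentrated at the point `i`. -/
def pointState [Fintype α] [DecidableEq α] (k : ℕ) (i : α) : Finset (Finset α) :=
  {a ∈ Finset.univ.powersetCard k | i ∈ a}

theorem isPacking_empty : IsPacking k (∅ : Finset (Finset α)) :=
  ⟨by simp [Set.Sized], by simp⟩

theorem isPacking_singleton {a : Finset α} : IsPacking k {a} ↔ a.card = k :=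
  ⟨fun h => h.sized (by simp), fun h => ⟨by simp [Set.Sized, h], by simp⟩⟩

theorem IsPacking.insert [DecidableEq α] {c : Finset (Finset α)} (hc : IsPacking k c)
    {a : Finset α} (ha : a.card = k) (hdisj : ∀ p ∈ c, Disjoint a p) :
    IsPacking k (insert a c) where
  sized := by simpa [Set.Sized, ha] using hc.sized
  pairwiseDisjoint := by
    rw [Finset.coe_insert]
    exact hc.pairwiseDisjoint.insert fun p hp _ => hdisj p hp

theorem IsPacking.exists_isBlock_superset [Finite α] {c : Finset (Finset α)}
    (hc : IsPacking k c) : ∃ b, c ⊆ b ∧ IsBlock k b :=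
  Finite.exists_le_maximal hc

theorem isPacking_pair [DecidableEq α] {s t : Finset α} (hs : s.card = k) (ht : t.card = k)
    (hst : Disjoint s t) : IsPacking k {s, t} :=
  (isPacking_singleton.2 ht).insert hs (by simpa using hst)

namespace IsBlock

variable {b : Finset (Finset α)}

theorem mem_of_forall_disjoint (hb : IsBlock k b) {a : Finset α} (ha : a.card = k)
    (hdisj : ∀ p ∈ b, Disjoint a p) : a ∈ b := by
  classical
  exact hb.le_of_ge (hb.prop.insert ha hdisj) (Finset.subset_insert a b)
    (Finset.mem_insert_self a b)

theorem eq_of_mem_of_mem (hb : IsBlock k b) {s t : Finset α} (hs : s ∈ b) (ht : t ∈ b)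
    {i : α} (his : i ∈ s) (hit : i ∈ t) : s = t :=
  hb.prop.pairwiseDisjoint.elim_finset hs ht i his hit

theorem exists_mem_mem [Fintype α] (hk : k ∣ Fintype.card α) (hb : IsBlock k b) (i : α) :
    ∃ a ∈ b, i ∈ a := by
  classical
  by_contra! hi
  set u : Finset α := (b.biUnion id)ᶜ with hu
  have hiu : i ∈ u := by simpa [hu] using hi
  have hku : k ∣ u.card := by
    rw [hu, Finset.card_compl, Finset.card_biUnion hb.prop.pairwiseDisjoint]
    exact Nat.dvd_sub hk (Finset.dvd_sum fun a ha => (hb.prop.sized ha).symm.dvd)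
  have hu_pos : 0 < u.card := Finset.card_pos.2 ⟨i, hiu⟩
  obtain ⟨a, hia, hau, ha⟩ := Finset.exists_subsuperset_card_eq (Finset.singleton_subset_iff.2 hiu)
    (Finset.card_singleton i ▸ Nat.pos_of_dvd_of_pos hku hu_pos) (Nat.le_of_dvd hu_pos hku)
  have hab : a ∈ b := hb.mem_of_forall_disjoint ha fun p hp =>
    (Finset.subset_compl_iff_disjoint_right.1 hau).mono_right (Finset.subset_biUnion_of_mem id hp)
  exact hi a hab (Finset.singleton_subset_iff.1 hia)

end IsBlock

section PointState

variable [Fintype α] [DecidableEq α]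

theorem mem_pointState {i : α} {a : Finset α} : a ∈ pointState k i ↔ a.card = k ∧ i ∈ a := by
  simp [pointState]

theorem isTwoValuedState_pointState (hk : k ∣ Fintype.card α) (i : α) :
    IsTwoValuedState k (pointState k i) where
  sized _ ha := (mem_pointState.1 ha).1
  existsUnique_mem b hb := by
    obtain ⟨a, hab, hia⟩ := hb.exists_mem_mem hk i
    exact ⟨a, ⟨hab, mem_pointState.2 ⟨hb.prop.sized hab, hia⟩⟩,
      fun s hs => hb.eq_of_mem_of_mem hs.1 hab (mem_pointState.1 hs.2).2 hia⟩

theorem pointState_injective (hk : k ≠ 0) (hcard : k < Fintype.card α) :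
    Function.Injective (pointState k : α → Finset (Finset α)) := by
  intro i j hij
  by_contra hne
  obtain ⟨a, hia, haj, ha⟩ := Finset.exists_subsuperset_card_eq (s := {i}) (t := {j}ᶜ) (n := k)
    (by simpa using Ne.symm hne) (by rw [Finset.card_singleton]; omega)
    (by rw [Finset.card_compl, Finset.card_singleton]; omega)
  have hja : j ∈ a :=
    (mem_pointState.1 (hij ▸ mem_pointState.2 ⟨ha, Finset.singleton_subset_iff.1 hia⟩)).2
  simpa using haj hja

end PointState

namespace IsTwoValuedState

variable {T : Finset (Finset α)}

theorem exists_mem_forall_disjoint [Finite α] (hT : IsTwoValuedState k T)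
    {c : Finset (Finset α)} (hc : IsPacking k c) (hcT : ∀ p ∈ c, p ∉ T) :
    ∃ t ∈ T, ∀ p ∈ c, Disjoint t p := by
  obtain ⟨b, hcb, hb⟩ := hc.exists_isBlock_superset
  obtain ⟨t, ⟨htb, htT⟩, -⟩ := hT.existsUnique_mem b hb
  exact ⟨t, htT, fun p hp =>
    hb.prop.pairwiseDisjoint htb (hcb hp) fun h => hcT p hp (h ▸ htT)⟩

theorem nonempty [Finite α] (hT : IsTwoValuedState k T) : T.Nonempty := by
  obtain ⟨t, ht, -⟩ := hT.exists_mem_forall_disjoint isPacking_empty (by simp)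
  exact ⟨t, ht⟩

theorem intersecting [Finite α] [DecidableEq α] (hT : IsTwoValuedState k T) (hk : k ≠ 0) :
    (T : Set (Finset α)).Intersecting := by
  intro s hs t ht hst
  obtain ⟨b, hsub, hb⟩ :=
    (isPacking_pair (hT.sized hs) (hT.sized ht) hst).exists_isBlock_superset
  have heq : s = t := (hT.existsUnique_mem b hb).unique
    ⟨hsub (by simp), hs⟩ ⟨hsub (by simp), ht⟩
  rw [heq, Finset.disjoint_self_iff_empty, ← Finset.card_eq_zero, hT.sized ht] at hst
  exact hk hst

theorem insert_erase_mem [Fintype α] [DecidableEq α] (hT : IsTwoValuedState k T)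
    (hcard : 3 * k ≤ Fintype.card α) {s v : Finset α} (hs : s ∈ T) (hv : v ∈ T) {x y : α}
    (hxs : x ∈ s) (hys : y ∉ s) (hxv : x ∉ v) : insert y (s.erase x) ∈ T := by
  have hk : k ≠ 0 := hT.sized hs ▸ Finset.card_ne_zero_of_mem hxs
  have hxy : x ≠ y := ne_of_mem_of_not_mem hxs hys
  set w := insert y (s.erase x) with hw
  have hw_card : w.card = k := by
    rw [hw, Finset.card_insert_of_notMem (by simp [hys]), Finset.card_erase_add_one hxs,
      hT.sized hs]
  have hroom : k ≤ (w ∪ v)ᶜ.card := by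
    have hwv := Finset.card_union_le w v
    rw [hw_card, hT.sized hv] at hwv
    rw [Finset.card_compl]
    omega
  obtain ⟨q, hxq, hq, hq_card⟩ := Finset.exists_subsuperset_card_eq
    (s := {x}) (t := (w ∪ v)ᶜ) (by simp [hw, hxy, hxv])
    (by simpa using Nat.one_le_iff_ne_zero.2 hk) hroom
  obtain ⟨hqw, hqv⟩ :=
    Finset.disjoint_union_right.1 (Finset.subset_compl_iff_disjoint_right.1 hq)
  have hqT : q ∉ T := fun hqT => hT.intersecting hk hqT hv hqv
  by_contra hwT
  obtain ⟨t, htT, ht⟩ := hT.exists_mem_forall_disjoint (isPacking_pair hq_card hw_card hqw)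
    (by simp [hqT, hwT])
  have hs_sub : s ⊆ q ∪ w := by
    rw [← Finset.insert_erase hxs]
    exact Finset.insert_subset (Finset.mem_union_left w (Finset.singleton_subset_iff.1 hxq))
      ((Finset.subset_insert y _).trans Finset.subset_union_right)
  have hts : Disjoint t (q ∪ w) :=
    Finset.disjoint_union_right.2 ⟨ht q (by simp), ht w (by simp)⟩
  exact hT.intersecting hk htT hs (hts.mono_right hs_sub)

theorem exists_forall_mem [Fintype α] (hT : IsTwoValuedState k T) (hk : k ≠ 0)
    (hcard : 3 * k ≤ Fintype.card α) : ∃ i, ∀ t ∈ T, i ∈ t := by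
  classical
  by_contra! hno
  obtain ⟨s, hs⟩ := hT.nonempty
  obtain ⟨t, hts, ht⟩ : ∃ t ⊆ sᶜ, t.card = k :=
    Finset.exists_subset_card_eq (by rw [Finset.card_compl, hT.sized hs]; omega)
  have htT : t ∈ (T : Set (Finset α)) := by
    refine mem_of_exchange_closed (fun r hr x hx y hy => ?_) hs ((hT.sized hs).trans ht.symm)
    obtain ⟨v, hv, hxv⟩ := hno x
    exact hT.insert_erase_mem hcard hr hv hx hy hxv
  exact hT.intersecting hk htT hs (Finset.subset_compl_iff_disjoint_right.1 hts)

theorem eq_pointState_of_forall_mem [Fintype α] [DecidableEq α] (hT : IsTwoValuedState k T) {i : α}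
    (hi : ∀ t ∈ T, i ∈ t) : T = pointState k i := by
  ext a
  rw [mem_pointState]
  refine ⟨fun ha => ⟨hT.sized ha, hi a ha⟩, fun ⟨ha, hia⟩ => ?_⟩
  obtain ⟨b, hab, hb⟩ := (isPacking_singleton.2 ha).exists_isBlock_superset
  obtain ⟨t, ⟨htb, htT⟩, -⟩ := hT.existsUnique_mem b hb
  rwa [hb.eq_of_mem_of_mem (Finset.singleton_subset_iff.1 hab) htb hia (hi t htT)]

end IsTwoValuedState

theorem setOf_isTwoValuedState [Fintype α] [DecidableEq α] (hk : k ≠ 0)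
    (hdvd : k ∣ Fintype.card α) (hcard : 3 * k ≤ Fintype.card α) :
    {T : Finset (Finset α) | IsTwoValuedState k T} = Set.range (pointState k) := by
  refine Set.Subset.antisymm (fun T hT => ?_)
    (Set.range_subset_iff.2 (isTwoValuedState_pointState hdvd))
  obtain ⟨i, hi⟩ := IsTwoValuedState.exists_forall_mem hT hk hcard
  exact ⟨i, (IsTwoValuedState.eq_pointState_of_forall_mem hT hi).symm⟩

theorem L32_states_card_and_full_general [Fintype α] [DecidableEq α] (hk : k ≠ 0)
    (hdvd : k ∣ Fintype.card α) (hcard : 3 * k ≤ Fintype.card α) :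
    {T : Finset (Finset α) | IsTwoValuedState k T}.ncard = Fintype.card α ∧
    ∀ x : Finset α, x.card = k → ∀ y : Finset α, y.card = k → (x ∩ y).Nonempty →
      ∃ T, IsTwoValuedState k T ∧ x ∈ T ∧ y ∈ T := by
  constructor
  · rw [setOf_isTwoValuedState hk hdvd hcard,
      Set.ncard_range_of_injective (pointState_injective hk (by omega)), Nat.card_eq_fintype_card]
  · rintro x hx y hy ⟨i, hi⟩
    obtain ⟨hix, hiy⟩ := Finset.mem_inter.1 hi
    exact ⟨pointState k i, isTwoValuedState_pointState hdvd i,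
      mem_pointState.2 ⟨hx, hix⟩, mem_pointState.2 ⟨hy, hiy⟩⟩

end

theorem mem_L32Atoms {a : Finset (Fin 6)} : a ∈ L32Atoms ↔ a.card = 2 :=
  Finset.mem_powersetCard_univ

theorem L32IsBlock_iff_isBlock {b : Finset (Finset (Fin 6))} : L32IsBlock b ↔ IsBlock 2 b := by
  simp only [L32IsBlock, ← Finset.disjoint_iff_inter_eq_empty]
  constructor
  · rintro ⟨hatoms, hdisj, hmax⟩
    refine ⟨⟨fun a ha => mem_L32Atoms.1 (hatoms ha), fun x hx y hy => hdisj x hx y hy⟩,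
      fun c hc hbc a hac => ?_⟩
    by_contra hab
    exact hmax a (mem_L32Atoms.2 (hc.sized hac)) hab fun x hx =>
      hc.pairwiseDisjoint hac (hbc hx) (ne_of_mem_of_not_mem hx hab).symm
  · intro hb
    exact ⟨fun a ha => mem_L32Atoms.2 (hb.prop.sized ha),
      fun x hx y hy => hb.prop.pairwiseDisjoint hx hy,
      fun a ha hab hdisj => hab (hb.mem_of_forall_disjoint (mem_L32Atoms.1 ha) hdisj)⟩

theorem mem_L32Blocks {b : Finset (Finset (Fin 6))} : b ∈ L32Blocks ↔ IsBlock 2 b := by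
  rw [L32Blocks, Finset.mem_filter_univ, L32IsBlock_iff_isBlock]

theorem mem_L32States {T : Finset (Finset (Fin 6))} :
    T ∈ L32States ↔ IsTwoValuedState 2 T := by
  rw [L32States, Finset.mem_filter, Finset.mem_powerset, L32Atoms,
    Finset.subset_powersetCard_univ_iff]
  simp only [mem_L32Blocks, Finset.card_eq_one_iff_existsUnique, Finset.mem_filter]
  exact ⟨fun h => ⟨h.1, h.2⟩, fun h => ⟨h.1, h.2⟩⟩

/-- L³₂ admits exactly 6 two-valued states, and this set of states is full:
any two non-disjoint atoms are simultaneously given value 1 by some two-valued state. -/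
theorem L32_states_card_and_full :
    L32States.card = 6 ∧
    ∀ x ∈ L32Atoms, ∀ y ∈ L32Atoms, (x ∩ y).Nonempty →
      ∃ T ∈ L32States, x ∈ T ∧ y ∈ T := by
  simpa only [← mem_L32States, ← mem_L32Atoms, Finset.setOfPred_mem, Set.ncard_coe_finset,
    Fintype.card_fin] using
    L32_states_card_and_full_general (α := Fin 6) two_ne_zero (by decide) (by decide)
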